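/- arXiv:1409.4799 — 9 statements merged into one kernel-verified Lean document; each statement's English description precedes it below -/
import Mathlib

section
/- Let R > 0 and x ∈ [0,1]. In the Euclidean plane ℝ², put B = (0,0), C = (R,0), and C′ = (xR, R). Let f be the perpendicular bisector of B and C′ (the crease folding B onto C′) and let g be the perpendicular bisector of C and C′ (the crease folding C onto C′). Then f and g intersect in exactly one point S, namely S = (R/2, (R/2)·(1 − x + x²)); in particular the intersection point S lies on the vertical median {(p₁,p₂) : p₁ = R/2} of the square with vertices B=(0,0), C=(R,0), D=(R,R), A=(0,R), for every x ∈ [0,1]. -/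
noncomputable section
open Real EuclideanGeometry

/-- Points of the Euclidean plane `ℝ²`. -/
abbrev Pt : Type := EuclideanSpace ℝ (Fin 2)

/-- The point of `ℝ²` with coordinates `(x, y)`. -/
def pt (x y : ℝ) : Pt := !₂[x, y]

/-- The perpendicular bisector of two points `U`, `V` of the plane: the crease
obtained by folding `U` onto `V`. -/
def perpBisector (U V : Pt) : Set Pt := {P | dist P U = dist P V}

/-!
A point on both creases is equidistant from `B`, `C` and `C'`, so it also lies on the perpendicular
bisector of `B` and `C`, which is the vertical median. Conversely, `C'` and `B` have different
heights, so the crease folding `B` onto `C'` is not vertical and meets the median exactly once;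
that point is then equidistant from all three.
-/

lemma mem_perpBisector_iff {U V P : Pt} : P ∈ perpBisector U V ↔ dist P U = dist P V :=
  Iff.rfl

lemma perpBisector_inter_perpBisector_right (U V W : Pt) :
    perpBisector U W ∩ perpBisector V W = perpBisector U V ∩ perpBisector U W := by
  ext P
  simp only [Set.mem_inter_iff, mem_perpBisector_iff]
  constructor
  · rintro ⟨hUW, hVW⟩
    exact ⟨hUW.trans hVW.symm, hUW⟩
  · rintro ⟨hUV, hUW⟩
    exact ⟨hUW, hUV.symm.trans hUW⟩

lemma eq_pt_iff {P : Pt} {a b : ℝ} : P = pt a b ↔ P 0 = a ∧ P 1 = b := by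
  simp [PiLp.ext_iff, Fin.forall_fin_two, pt]

lemma dist_sq_pt (P : Pt) (a b : ℝ) : dist P (pt a b) ^ 2 = (P 0 - a) ^ 2 + (P 1 - b) ^ 2 := by
  simp [EuclideanSpace.dist_sq_eq, Real.dist_eq, pt]

lemma mem_perpBisector_pt_iff {P : Pt} {a b c d : ℝ} :
    P ∈ perpBisector (pt a b) (pt c d) ↔
      (c - a) * (P 0 - (a + c) / 2) + (d - b) * (P 1 - (b + d) / 2) = 0 := by
  rw [mem_perpBisector_iff, ← sq_eq_sq₀ dist_nonneg dist_nonneg, dist_sq_pt, dist_sq_pt]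
  constructor <;> intro h <;> linarith

lemma perpBisector_pt_of_snd_eq {a c : ℝ} (hac : a ≠ c) (b : ℝ) :
    perpBisector (pt a b) (pt c b) = {P | P 0 = (a + c) / 2} := by
  ext P
  simp [mem_perpBisector_pt_iff, sub_eq_zero, hac.symm]

lemma perpBisector_inter_perpBisector_eq_singleton {a b c v : ℝ} (hac : a ≠ c) (hbv : b ≠ v)
    (u : ℝ) :
    perpBisector (pt a b) (pt u v) ∩ perpBisector (pt c b) (pt u v) =
      {pt ((a + c) / 2) ((b + v) / 2 + (u - a) * (u - c) / (2 * (v - b)))} := by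
  rw [perpBisector_inter_perpBisector_right, perpBisector_pt_of_snd_eq hac]
  ext P
  rw [Set.mem_inter_iff, Set.mem_ofPred_eq, mem_perpBisector_pt_iff, Set.mem_singleton_iff,
    eq_pt_iff]
  refine and_congr_right fun hP => ?_
  have hvb : v - b ≠ 0 := sub_ne_zero.mpr hbv.symm
  rw [hP, ← sub_eq_iff_eq_add', eq_div_iff (mul_ne_zero two_ne_zero hvb)]
  constructor <;> intro h <;> linarith

theorem haga_second_theorem_part1_general {R : ℝ} (hR : R ≠ 0) (x : ℝ) :
    perpBisector (pt 0 0) (pt (x * R) R) ∩ perpBisector (pt R 0) (pt (x * R) R) =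
        {pt (R / 2) ((R / 2) * (1 - x + x ^ 2))} ∧
      pt (R / 2) ((R / 2) * (1 - x + x ^ 2)) ∈ {p : Pt | p 0 = R / 2} := by
  have height_eq : (0 + R) / 2 + (x * R - 0) * (x * R - R) / (2 * (R - 0)) =
      R / 2 * (1 - x + x ^ 2) := by
    rw [sub_zero, sub_zero]
    field_simp
    ring
  refine ⟨?_, (eq_pt_iff.mp rfl).1⟩
  rw [perpBisector_inter_perpBisector_eq_singleton hR.symm hR.symm, height_eq, zero_add]

/-- **Haga's second theorem, part 1.**  For the square with vertices
`B=(0,0)`, `C=(R,0)`, `D=(R,R)`, `A=(0,R)` and the point `C' = (xR, R)` on side `AD`,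
the crease folding `B` onto `C'` and the crease folding `C` onto `C'` intersect in
exactly one point `S = (R/2, (R/2)(1 - x + x²))`; in particular `S` lies on the
vertical median `{p | p 0 = R/2}` of the square. -/
theorem haga_second_theorem_part1 (R x : ℝ) (hR : 0 < R) (hx : x ∈ Set.Icc (0:ℝ) 1)
    (B : Pt) (hB : B = pt 0 0) (C : Pt) (hC : C = pt R 0) (C' : Pt) (hC' : C' = pt (x*R) R)
    (S : Pt) (hS : S = pt (R/2) ((R/2) * (1 - x + x^2))) :
    perpBisector B C' ∩ perpBisector C C' = {S} ∧ S ∈ {p : Pt | p 0 = R/2} := by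
  subst hB hC hC' hS
  exact haga_second_theorem_part1_general hR.ne' x
end
end

section
/- Let R > 0 and x ∈ [0,1]. In ℝ², put B = (0,0), C = (R,0), C′ = (xR, R), and let S = (R/2, (R/2)(1 − x + x²)) be the intersection point of the perpendicular bisector of {B, C′} and the perpendicular bisector of {C, C′}. Then dist(S, B) = dist(S, C) = dist(S, C′) = (R/2)·√((1 + (1−x)²)(1 + x²)) = (R/2)·√(2 − x(1−x)(2 − x(1−x))). -/
noncomputable section
open Real EuclideanGeometry

/-!
Both creases pass through `S`, so `S` is equidistant from `B`, `C` and `C'`, and only its distance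
to the origin `B` has to be computed. With `r = R / 2` and `p = x (1 - x)` we have
`S = (r, r (1 - p))`, hence `dist S B = r √(1 + (1 - p)²)`. The factored form of the radicand is the
two-square identity `(1 + a²) (1 + b²) = (1 - a b)² + (a + b)²` at `a = 1 - x`, `b = x`, for which
`a + b = 1`.
-/

theorem dist_pt_pt (a b c d : ℝ) : dist (pt a b) (pt c d) = √((a - c) ^ 2 + (b - d) ^ 2) := by
  simp [pt, EuclideanSpace.dist_eq, Fin.sum_univ_two, Real.dist_eq, sq_abs]

theorem pt_mem_perpBisector_iff (p q a b c d : ℝ) :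
    pt p q ∈ perpBisector (pt a b) (pt c d) ↔
      2 * (c - a) * p + 2 * (d - b) * q = c ^ 2 + d ^ 2 - (a ^ 2 + b ^ 2) := by
  change dist (pt p q) (pt a b) = dist (pt p q) (pt c d) ↔ _
  rw [dist_pt_pt, dist_pt_pt, Real.sqrt_inj (by positivity) (by positivity)]
  constructor <;> intro h <;> linear_combination h

theorem dist_pt_mul_origin {r : ℝ} (hr : 0 ≤ r) (t : ℝ) :
    dist (pt r (r * t)) (pt 0 0) = r * √(1 + t ^ 2) := by
  have radicand_eq : (r - 0) ^ 2 + (r * t - 0) ^ 2 = r ^ 2 * (1 + t ^ 2) := by ring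
  rw [dist_pt_pt, radicand_eq, Real.sqrt_mul (sq_nonneg r), Real.sqrt_sq hr]

theorem haga_second_theorem_part2_general (R x : ℝ) (hR : 0 ≤ R) :
    let B := pt 0 0
    let C := pt R 0
    let C' := pt (x * R) R
    let S := pt (R / 2) ((R / 2) * (1 - x + x ^ 2))
    dist S B = dist S C ∧ dist S C = dist S C' ∧
    dist S C' = (R / 2) * √((1 + (1 - x) ^ 2) * (1 + x ^ 2)) ∧
    (R / 2) * √((1 + (1 - x) ^ 2) * (1 + x ^ 2))
      = (R / 2) * √(2 - x * (1 - x) * (2 - x * (1 - x))) := by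
  intro B C C' S
  have dist_B_eq : dist S B = dist S C' :=
    (pt_mem_perpBisector_iff ..).mpr (by ring)
  have dist_C_eq : dist S C = dist S C' :=
    (pt_mem_perpBisector_iff ..).mpr (by ring)
  have radicand_eq : (1 + (1 - x) ^ 2) * (1 + x ^ 2) = 1 + (1 - x + x ^ 2) ^ 2 :=
    calc
      _ = (1 ^ 2 + (1 - x) ^ 2) * (1 ^ 2 + x ^ 2) := by rw [one_pow]
      _ = (1 * 1 - (1 - x) * x) ^ 2 + (1 * x + (1 - x) * 1) ^ 2 := sq_add_sq_mul_sq_add_sq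
      _ = 1 + (1 - x + x ^ 2) ^ 2 := by ring
  refine ⟨dist_B_eq.trans dist_C_eq.symm, dist_C_eq, ?_, ?_⟩
  · rw [← dist_B_eq, radicand_eq]
    exact dist_pt_mul_origin (by positivity) _
  · rw [radicand_eq]
    congr 2
    ring

/-- **Haga's second theorem, part 2.**  With `B=(0,0)`, `C=(R,0)`, `C'=(xR,R)` and
`S = (R/2, (R/2)(1-x+x²))` the intersection point of the two creases,
the three distances from `S` to `B`, `C` and `C'` coincide and equal
`(R/2)·√((1+(1-x)²)(1+x²)) = (R/2)·√(2 - x(1-x)(2 - x(1-x)))`. -/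
theorem haga_second_theorem_part2 (R x : ℝ) (hR : 0 < R) (hx : x ∈ Set.Icc (0:ℝ) 1)
    (B : Pt) (hB : B = pt 0 0) (C : Pt) (hC : C = pt R 0) (C' : Pt) (hC' : C' = pt (x*R) R)
    (S : Pt) (hS : S = pt (R/2) ((R/2) * (1 - x + x^2)))
    (hSmem : perpBisector B C' ∩ perpBisector C C' = {S}) :
    dist S B = dist S C ∧ dist S C = dist S C' ∧
    dist S C' = (R/2) * Real.sqrt ((1 + (1 - x)^2) * (1 + x^2)) ∧
    (R/2) * Real.sqrt ((1 + (1 - x)^2) * (1 + x^2))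
      = (R/2) * Real.sqrt (2 - x*(1 - x)*(2 - x*(1 - x))) := by
  subst hB hC hC' hS
  exact haga_second_theorem_part2_general R x hR.le
end
end

section
/- (Huzita) Let α ∈ (0, π/2), let A = (a_x, a_y) with a_y ≠ 0, and let B = (b_x, b_y) with b_y ≠ b_x·tan α (B does not lie on the line through the origin of slope tan α). Let X ∈ ℝ with X ≠ 0 and a_y ≠ X·tan α, put A′ = (a_x − X, 0), and suppose there exist t ∈ ℝ and B′ = (t·cos α, t·sin α) with B′ ≠ B such that the perpendicular bisector of A and A′ equals the perpendicular bisector of B and B′ (a single fold maps A onto a point A′ of the x-axis and simultaneously B onto a point B′ of the line through the origin with angle α). Then X satisfies the cubic equation X³ + (b_x − 2a_x + (b_y − a_y)/tan α)·X² + a_y·(2b_y − a_y + 2(a_x − b_x)/tan α)·X − a_y²·(b_x − (a_y − b_y)/tan α) = 0. -/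
noncomputable section
open Real EuclideanGeometry

/-!
A fold taking `A` to `A'` is the reflection in the crease, so a common crease forces
`‖A' - A‖² (B' - B) = 2 ⟪M - B, A' - A⟫ (A' - A)`, where `M` is the midpoint of `A` and `A'`.
With `B' = (x, m x)`, `m = tan α`, its two coordinates are linear in `x`; eliminating `x` gives the
cubic.
-/

section InnerProductSpace

open scoped InnerProductSpace

variable {V P : Type*} [NormedAddCommGroup V] [InnerProductSpace ℝ V] [MetricSpace P]
  [NormedAddTorsor V P] {A A' B B' : P}

theorem span_vsub_eq_of_perpBisector_eq
    (h : AffineSubspace.perpBisector A A' = AffineSubspace.perpBisector B B') :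
    ℝ ∙ (A' -ᵥ A) = ℝ ∙ (B' -ᵥ B) := by
  have hdir := congrArg AffineSubspace.direction h
  simp only [AffineSubspace.direction_perpBisector] at hdir
  rw [← Submodule.orthogonal_orthogonal (ℝ ∙ (A' -ᵥ A)), hdir,
    Submodule.orthogonal_orthogonal]

theorem norm_sq_smul_vsub_eq_of_perpBisector_eq
    (h : AffineSubspace.perpBisector A A' = AffineSubspace.perpBisector B B') :
    ‖A' -ᵥ A‖ ^ 2 • (B' -ᵥ B) = (2 * ⟪midpoint ℝ A A' -ᵥ B, A' -ᵥ A⟫_ℝ) • (A' -ᵥ A) := by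
  obtain ⟨s, hs⟩ : ∃ s : ℝˣ, s • (A' -ᵥ A) = B' -ᵥ B :=
    Submodule.span_singleton_eq_span_singleton.mp (span_vsub_eq_of_perpBisector_eq h)
  have hBB' : midpoint ℝ B B' -ᵥ B = (2⁻¹ * s : ℝ) • (A' -ᵥ A) := by
    rw [midpoint_vsub_left, ← hs, Units.smul_def, smul_smul, invOf_eq_inv]
  have horth : ⟪midpoint ℝ A A' -ᵥ midpoint ℝ B B', A' -ᵥ A⟫_ℝ = 0 := by
    have hmem := AffineSubspace.midpoint_mem_perpBisector A A'
    rw [h, AffineSubspace.mem_perpBisector_iff_inner_eq_zero, ← hs, Units.smul_def,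
      inner_smul_right] at hmem
    exact (mul_eq_zero.mp hmem).resolve_left s.ne_zero
  have hinner : 2 * ⟪midpoint ℝ A A' -ᵥ B, A' -ᵥ A⟫_ℝ = s * ‖A' -ᵥ A‖ ^ 2 := by
    rw [← vsub_add_vsub_cancel _ (midpoint ℝ B B') B, inner_add_left, horth, hBB',
      real_inner_smul_left, real_inner_self_eq_norm_sq]
    ring
  rw [hinner, ← hs, Units.smul_def, smul_smul, mul_comm]

end InnerProductSpace

theorem coe_affineSubspace_perpBisector (U V : Pt) :
    (AffineSubspace.perpBisector U V : Set Pt) = perpBisector U V :=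
  Set.ext fun _ => AffineSubspace.mem_perpBisector_iff_dist_eq

theorem sum_sq_mul_sub_eq_of_perpBisector_eq {ι : Type*} [Fintype ι]
    {A A' B B' : EuclideanSpace ℝ ι}
    (h : AffineSubspace.perpBisector A A' = AffineSubspace.perpBisector B B') (i : ι) :
    (∑ j, (A' j - A j) ^ 2) * (B' i - B i) =
      (∑ j, (A j + A' j - 2 * B j) * (A' j - A j)) * (A' i - A i) := by
  have hinner : 2 * inner ℝ (midpoint ℝ A A' -ᵥ B) (A' -ᵥ A) =
      ∑ j, (A j + A' j - 2 * B j) * (A' j - A j) := by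
    simp only [PiLp.inner_apply, Finset.mul_sum]
    refine Finset.sum_congr rfl fun j _ => ?_
    simp only [midpoint_eq_smul_add, invOf_eq_inv, smul_add, vsub_eq_sub, PiLp.sub_apply,
      PiLp.add_apply, PiLp.smul_apply, smul_eq_mul, RCLike.inner_apply, conj_trivial]
    ring
  have hvec := norm_sq_smul_vsub_eq_of_perpBisector_eq h
  rw [hinner] at hvec
  simpa [EuclideanSpace.real_norm_sq_eq] using congrArg (fun v : EuclideanSpace ℝ ι => v i) hvec

theorem huzita_cubic_general (m a_x a_y b_x b_y X : ℝ) (hm : m ≠ 0)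
    (hfold : ∃ x : ℝ, perpBisector (pt a_x a_y) (pt (a_x - X) 0)
      = perpBisector (pt b_x b_y) (pt x (m * x))) :
    X^3 + (b_x - 2*a_x + (b_y - a_y)/m) * X^2
      + a_y * (2*b_y - a_y + 2*(a_x - b_x)/m) * X
      - a_y^2 * (b_x - (a_y - b_y)/m) = 0 := by
  obtain ⟨x, hcrease⟩ := hfold
  simp only [← coe_affineSubspace_perpBisector, SetLike.coe_set_eq] at hcrease
  have hcoord := sum_sq_mul_sub_eq_of_perpBisector_eq hcrease
  have hx := hcoord 0
  have hmx := hcoord 1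
  simp only [pt, Fin.sum_univ_two, Matrix.cons_val_zero, Matrix.cons_val_one,
    Matrix.cons_val_fin_one] at hx hmx
  field_simp
  linear_combination m * hx - hmx

/-- **Huzita's origami solution of the general cubic.**  Let `α ∈ (0, π/2)`,
`A = (a_x, a_y)` with `a_y ≠ 0`, `B = (b_x, b_y)` not on the line through the origin
of slope `tan α`.  Let `X ≠ 0` with `a_y ≠ X·tan α` and `A' = (a_x - X, 0)`.  If a single
fold maps `A` onto `A'` and simultaneously `B` onto some point `B' ≠ B` of the line
through the origin with angle `α` (one common crease = common perpendicular bisector),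
then `X` satisfies the stated cubic equation. -/
theorem huzita_cubic (α a_x a_y b_x b_y X : ℝ)
    (hα : α ∈ Set.Ioo 0 (π/2)) (ha : a_y ≠ 0)
    (hb : b_y ≠ b_x * Real.tan α)
    (hX : X ≠ 0) (hXα : a_y ≠ X * Real.tan α)
    (hfold : ∃ t : ℝ, pt (t * Real.cos α) (t * Real.sin α) ≠ pt b_x b_y ∧
      perpBisector (pt a_x a_y) (pt (a_x - X) 0)
        = perpBisector (pt b_x b_y) (pt (t * Real.cos α) (t * Real.sin α))) :
    X^3 + (b_x - 2*a_x + (b_y - a_y)/Real.tan α) * X^2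
      + a_y * (2*b_y - a_y + 2*(a_x - b_x)/Real.tan α) * X
      - a_y^2 * (b_x - (a_y - b_y)/Real.tan α) = 0 := by
  obtain ⟨t, -, hcrease⟩ := hfold
  have hcos : Real.cos α ≠ 0 := (Real.cos_pos_of_mem_Ioo
    ⟨by linarith [hα.1, Real.pi_pos], hα.2⟩).ne'
  exact huzita_cubic_general (Real.tan α) a_x a_y b_x b_y X
    (Real.tan_pos_of_pos_of_lt_pi_div_two hα.1 hα.2).ne'
    ⟨t * Real.cos α, by rwa [mul_left_comm, Real.tan_mul_cos hcos]⟩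
end
end

section
/- Let A = (a_x, a_y) with a_y ≠ 0 and B = (b_x, b_y) with b_x ≠ 0. Let X ∈ ℝ, put A′ = (a_x − X, 0), and suppose there exist t ∈ ℝ and B′ = (0, t) with B′ ≠ B and A′ ≠ A such that the perpendicular bisector of A and A′ equals the perpendicular bisector of B and B′ (a single fold maps A onto a point A′ of the x-axis and simultaneously B onto a point B′ of the y-axis). Then X satisfies the cubic equation X³ + (b_x − 2a_x)·X² + a_y·(2b_y − a_y)·X − a_y²·b_x = 0. -/
/-!
A common crease of the folds `A ↦ A'` and `B ↦ B'` is orthogonal to both displacements, so these are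
parallel; and it contains the midpoint of `B` and `B'`, which is therefore equidistant from `A` and
`A'`. For `B' = (0, t)` these are two equations linear in `t`, and eliminating `t` leaves the cubic.
-/

noncomputable section
open Real EuclideanGeometry

section InnerProductSpace

variable {V P : Type*} [NormedAddCommGroup V] [InnerProductSpace ℝ V] [MetricSpace P]
  [NormedAddTorsor V P] {p₁ p₂ q₁ q₂ : P}

theorem span_vsub_eq_of_perpBisector_eq_s7
    (h : AffineSubspace.perpBisector p₁ p₂ = AffineSubspace.perpBisector q₁ q₂) :
    ℝ ∙ (p₂ -ᵥ p₁) = ℝ ∙ (q₂ -ᵥ q₁) := by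
  have horth : (ℝ ∙ (p₂ -ᵥ p₁))ᗮ = (ℝ ∙ (q₂ -ᵥ q₁))ᗮ := by
    simpa only [AffineSubspace.direction_perpBisector] using
      congrArg AffineSubspace.direction h
  rw [← Submodule.orthogonal_orthogonal (ℝ ∙ (p₂ -ᵥ p₁)), horth,
    Submodule.orthogonal_orthogonal]

theorem inner_midpoint_vsub_midpoint_eq_zero_of_perpBisector_eq
    (h : AffineSubspace.perpBisector p₁ p₂ = AffineSubspace.perpBisector q₁ q₂) :
    inner ℝ (midpoint ℝ q₁ q₂ -ᵥ midpoint ℝ p₁ p₂) (p₂ -ᵥ p₁) = 0 := by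
  rw [← AffineSubspace.mem_perpBisector_iff_inner_eq_zero, h]
  exact AffineSubspace.midpoint_mem_perpBisector q₁ q₂

end InnerProductSpace

theorem pt_apply_zero (x y : ℝ) : pt x y 0 = x := rfl

theorem pt_apply_one (x y : ℝ) : pt x y 1 = y := rfl

theorem perpBisector_eq_coe (U V : Pt) :
    perpBisector U V = (AffineSubspace.perpBisector U V : Set Pt) :=
  Set.ext fun _ => AffineSubspace.mem_perpBisector_iff_dist_eq.symm

theorem perpBisector_eq_iff {A A' B B' : Pt} :
    perpBisector A A' = perpBisector B B' ↔
      AffineSubspace.perpBisector A A' = AffineSubspace.perpBisector B B' := by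
  rw [perpBisector_eq_coe, perpBisector_eq_coe, SetLike.coe_set_eq]

theorem sub_mul_sub_eq_of_perpBisector_eq {A A' B B' : Pt}
    (h : perpBisector A A' = perpBisector B B') :
    (A' 0 - A 0) * (B' 1 - B 1) = (A' 1 - A 1) * (B' 0 - B 0) := by
  have hspan := span_vsub_eq_of_perpBisector_eq_s7 (perpBisector_eq_iff.mp h)
  have hmem : A' -ᵥ A ∈ ℝ ∙ (B' -ᵥ B) := hspan ▸ Submodule.mem_span_singleton_self _
  obtain ⟨c, hc⟩ := Submodule.mem_span_singleton.mp hmem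
  have hcoord (i : Fin 2) : c * (B' i - B i) = A' i - A i := congrArg (· i) hc
  rw [← hcoord 0, ← hcoord 1]
  ring

theorem add_sub_add_mul_sub_eq_zero_of_perpBisector_eq {A A' B B' : Pt}
    (h : perpBisector A A' = perpBisector B B') :
    (B 0 + B' 0 - (A 0 + A' 0)) * (A' 0 - A 0) +
      (B 1 + B' 1 - (A 1 + A' 1)) * (A' 1 - A 1) = 0 := by
  have hinner :=
    inner_midpoint_vsub_midpoint_eq_zero_of_perpBisector_eq (perpBisector_eq_iff.mp h)
  simp only [vsub_eq_sub, midpoint_eq_smul_add, PiLp.inner_apply, Fin.sum_univ_two,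
    PiLp.sub_apply, PiLp.smul_apply, PiLp.add_apply, smul_eq_mul, invOf_eq_inv,
    RCLike.inner_apply, conj_trivial] at hinner
  linear_combination 2 * hinner

/-- **Huzita's cubic, special case `α = π/2`.**  Let `A = (a_x, a_y)` with `a_y ≠ 0`
and `B = (b_x, b_y)` with `b_x ≠ 0`.  If a single fold maps `A` onto `A' = (a_x - X, 0)`
on the x-axis (with `A' ≠ A`) and simultaneously `B` onto some point `B' = (0, t) ≠ B`
of the y-axis, then `X³ + (b_x - 2a_x)X² + a_y(2b_y - a_y)X - a_y²·b_x = 0`. -/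
theorem huzita_cubic_right_angle (a_x a_y b_x b_y X : ℝ)
    (ha : a_y ≠ 0) (hb : b_x ≠ 0)
    (hfold : ∃ t : ℝ, pt 0 t ≠ pt b_x b_y ∧ pt (a_x - X) 0 ≠ pt a_x a_y ∧
      perpBisector (pt a_x a_y) (pt (a_x - X) 0)
        = perpBisector (pt b_x b_y) (pt 0 t)) :
    X^3 + (b_x - 2*a_x)*X^2 + a_y*(2*b_y - a_y)*X - a_y^2*b_x = 0 := by
  obtain ⟨t, -, -, hcrease⟩ := hfold
  have hparallel : X * (b_y - t) = a_y * b_x := by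
    have := sub_mul_sub_eq_of_perpBisector_eq hcrease
    simp only [pt_apply_zero, pt_apply_one] at this
    linear_combination this
  have hmidpoint : (2 * a_x - X - b_x) * X + (a_y - b_y - t) * a_y = 0 := by
    have := add_sub_add_mul_sub_eq_zero_of_perpBisector_eq hcrease
    simp only [pt_apply_zero, pt_apply_one] at this
    linear_combination this
  linear_combination a_y * hparallel - X * hmidpoint
end
end

section
/- Let A = (a_x, a_y) and B = (b_x, b_y) with a_y ≠ 0, b_y ≠ 0, and a_y ≠ b_y. Let X ≠ 0 and Y ≠ 0, put A′ = (a_x − X, 0) and B′ = (b_x − Y, 0), and suppose the perpendicular bisector of A and A′ equals the perpendicular bisector of B and B′ (a single fold maps both A and B onto points of the x-axis). Then Y = (b_y/a_y)·X, and X satisfies the quadratic equation X² − 2·a_y·((a_x − b_x)/(a_y − b_y))·X − a_y² = 0. -/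
noncomputable section
open Real EuclideanGeometry

/-!
The crease of a fold taking `U` to `V` is normal to `V - U` and passes through the midpoint of `U`
and `V`. If two folds share their crease, then the two displacements are parallel, and the segment
joining the two midpoints is orthogonal to them. In coordinates, parallelism determines `Y`, and
eliminating it from the orthogonality relation gives the quadratic equation for `X`.
-/

section InnerProductSpace

variable {V P : Type*} [NormedAddCommGroup V] [InnerProductSpace ℝ V] [MetricSpace P]
  [NormedAddTorsor V P] {p₁ p₂ q₁ q₂ : P}

theorem span_vsub_eq_of_affineSubspace_perpBisector_eq
    (h : AffineSubspace.perpBisector p₁ p₂ = AffineSubspace.perpBisector q₁ q₂) :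
    Submodule.span ℝ {p₂ -ᵥ p₁} = Submodule.span ℝ {q₂ -ᵥ q₁} := by
  rw [← Submodule.orthogonal_orthogonal (Submodule.span ℝ {p₂ -ᵥ p₁}),
    ← AffineSubspace.direction_perpBisector, h, AffineSubspace.direction_perpBisector,
    Submodule.orthogonal_orthogonal]

theorem inner_midpoint_vsub_midpoint_eq_zero_of_affineSubspace_perpBisector_eq
    (h : AffineSubspace.perpBisector p₁ p₂ = AffineSubspace.perpBisector q₁ q₂) :
    inner ℝ (p₂ -ᵥ p₁) (midpoint ℝ q₁ q₂ -ᵥ midpoint ℝ p₁ p₂) = 0 := by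
  rw [← AffineSubspace.mem_perpBisector_iff_inner_eq_zero', h]
  exact AffineSubspace.midpoint_mem_perpBisector q₁ q₂

end InnerProductSpace

theorem perpBisector_eq_iff_affineSubspace_perpBisector_eq {U₁ V₁ U₂ V₂ : Pt} :
    perpBisector U₁ V₁ = perpBisector U₂ V₂ ↔
      AffineSubspace.perpBisector U₁ V₁ = AffineSubspace.perpBisector U₂ V₂ := by
  simp only [← coe_affineSubspace_perpBisector, SetLike.coe_set_eq]

section Coordinates

variable {x₁ y₁ x₂ y₂ x₃ y₃ x₄ y₄ : ℝ}

theorem pt_sub_pt : pt x₁ y₁ - pt x₂ y₂ = pt (x₁ - x₂) (y₁ - y₂) := by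
  ext i
  fin_cases i <;> simp [pt]

theorem midpoint_pt :
    midpoint ℝ (pt x₁ y₁) (pt x₂ y₂) = pt ((x₁ + x₂) / 2) ((y₁ + y₂) / 2) := by
  rw [midpoint_eq_smul_add]
  ext i
  fin_cases i <;> simp [pt] <;> ring

theorem inner_pt : inner ℝ (pt x₁ y₁) (pt x₂ y₂) = x₁ * x₂ + y₁ * y₂ := by
  simp [pt, PiLp.inner_apply, mul_comm]

theorem sub_mul_sub_eq_of_perpBisector_pt_eq
    (h : perpBisector (pt x₁ y₁) (pt x₂ y₂) = perpBisector (pt x₃ y₃) (pt x₄ y₄)) :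
    (x₄ - x₃) * (y₂ - y₁) = (y₄ - y₃) * (x₂ - x₁) := by
  have h_span := span_vsub_eq_of_affineSubspace_perpBisector_eq
    (perpBisector_eq_iff_affineSubspace_perpBisector_eq.mp h)
  obtain ⟨c, hc⟩ := Submodule.mem_span_singleton.mp
    (h_span ▸ Submodule.mem_span_singleton_self (pt x₄ y₄ -ᵥ pt x₃ y₃))
  have hx : c * (x₂ - x₁) = x₄ - x₃ := by simpa [pt] using congrArg (fun v ↦ v 0) hc
  have hy : c * (y₂ - y₁) = y₄ - y₃ := by simpa [pt] using congrArg (fun v ↦ v 1) hc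
  rw [← hx, ← hy]
  ring

theorem sub_mul_midpoint_sub_add_eq_zero_of_perpBisector_pt_eq
    (h : perpBisector (pt x₁ y₁) (pt x₂ y₂) = perpBisector (pt x₃ y₃) (pt x₄ y₄)) :
    (x₂ - x₁) * ((x₃ + x₄) / 2 - (x₁ + x₂) / 2) +
      (y₂ - y₁) * ((y₃ + y₄) / 2 - (y₁ + y₂) / 2) = 0 := by
  have h_inner := inner_midpoint_vsub_midpoint_eq_zero_of_affineSubspace_perpBisector_eq
    (perpBisector_eq_iff_affineSubspace_perpBisector_eq.mp h)
  simpa only [midpoint_pt, vsub_eq_sub, pt_sub_pt, inner_pt] using h_inner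

end Coordinates

/-- **Huzita's construction, degenerate case `α = 0`.**  Let `A = (a_x, a_y)`,
`B = (b_x, b_y)` with `a_y ≠ 0`, `b_y ≠ 0`, `a_y ≠ b_y`.  If a single fold maps
`A` onto `A' = (a_x - X, 0)` and `B` onto `B' = (b_x - Y, 0)`, both on the x-axis
(with `X ≠ 0`, `Y ≠ 0`), then `Y = (b_y/a_y)·X` and `X` satisfies the quadratic
`X² - 2a_y((a_x - b_x)/(a_y - b_y))X - a_y² = 0`. -/
theorem huzita_degenerate_alpha_zero (a_x a_y b_x b_y X Y : ℝ)
    (ha : a_y ≠ 0) (hb : b_y ≠ 0) (hab : a_y ≠ b_y)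
    (hX : X ≠ 0) (hY : Y ≠ 0)
    (hfold : perpBisector (pt a_x a_y) (pt (a_x - X) 0)
      = perpBisector (pt b_x b_y) (pt (b_x - Y) 0)) :
    Y = (b_y/a_y) * X ∧
    X^2 - 2*a_y*((a_x - b_x)/(a_y - b_y))*X - a_y^2 = 0 := by
  have h_parallel := sub_mul_sub_eq_of_perpBisector_pt_eq hfold
  have h_orthogonal := sub_mul_midpoint_sub_add_eq_zero_of_perpBisector_pt_eq hfold
  have h_quadratic : (X^2 - a_y^2) * (a_y - b_y) = 2 * a_y * (a_x - b_x) * X := by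
    linear_combination X * h_parallel - 2 * a_y * h_orthogonal
  have h_sub : a_y - b_y ≠ 0 := sub_ne_zero.mpr hab
  constructor
  · field_simp
    linear_combination h_parallel
  · field_simp
    linear_combination h_quadratic
end
end

section
/- The real roots of the heptagon polynomial C(7,x) = x³ − x² − 2x + 1 are exactly the three numbers 2·cos(π/7), 2·cos(3π/7), and 2·cos(5π/7) (the last equals −2·cos(2π/7)); these three numbers are pairwise distinct, and every real x with x³ − x² − 2x + 1 = 0 equals one of them. -/
noncomputable section
open Real

/-!
The heptagon polynomial is the case `m = 3` of `V_m := S_m - S_{m-1}`, a difference of rescaled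
Chebyshev polynomials. From `V_m(2 cos θ) sin θ = sin ((m + 1) θ) - sin (m θ)` one sees that `V_m`
vanishes at `2 cos θ` whenever `0 < θ < π` and `(m + 1) θ` and `m θ` add up to an odd multiple of
`π`. This gives `m` distinct roots, and `V_m` has degree at most `m`, so there are no others.
-/

section OddPolygon

open Polynomial

/-- The Chebyshev polynomial of the third kind, rescaled so as to take `2 cos θ` to
`cos ((m + 1/2) θ) / cos (θ / 2)`. For `m ≥ 2` it vanishes at `2 cos (π / (2 m + 1))`, the ratio of
the shortest diagonal to the side of a regular `(2 m + 1)`-gon. -/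
def oddPolygonPoly (R : Type*) [CommRing R] (m : ℤ) : R[X] :=
  Chebyshev.S R m - Chebyshev.S R (m - 1)

/-- The angle `(2 k + 1) π / (2 m + 1)`; the indices `k < m` give those in `(0, π)`. -/
def oddPolygonAngle (m k : ℕ) : ℝ :=
  (2 * k + 1) * π / (2 * m + 1)

theorem natDegree_chebyshevS_le (R : Type*) [CommRing R] (n : ℕ) :
    (Chebyshev.S R n).natDegree ≤ n := by
  induction n using Nat.twoStepInduction with
  | zero => simp
  | one => simpa using natDegree_X_le
  | more n ih ih_succ =>
    push_cast at ih_succ ⊢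
    rw [Chebyshev.S_add_two]
    have hmul : (X * Chebyshev.S R (n + 1)).natDegree ≤ 1 + (n + 1) :=
      natDegree_mul_le_of_le natDegree_X_le ih_succ
    exact (natDegree_sub_le_of_le hmul ih).trans (by lia)

theorem natDegree_oddPolygonPoly_le (R : Type*) [CommRing R] (m : ℕ) :
    (oddPolygonPoly R m).natDegree ≤ m := by
  cases m with
  | zero => simp [oddPolygonPoly]
  | succ m =>
    simpa [oddPolygonPoly] using
      natDegree_sub_le_of_le (natDegree_chebyshevS_le R (m + 1)) (natDegree_chebyshevS_le R m)

theorem oddPolygonPoly_eval_two (R : Type*) [CommRing R] (m : ℤ) :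
    (oddPolygonPoly R m).eval 2 = 1 := by
  simp [oddPolygonPoly]

theorem oddPolygonPoly_ne_zero (R : Type*) [CommRing R] [Nontrivial R] (m : ℤ) :
    oddPolygonPoly R m ≠ 0 := by
  intro h
  simpa [h] using oddPolygonPoly_eval_two R m

theorem oddPolygonPoly_three_eval {R : Type*} [CommRing R] (x : R) :
    (oddPolygonPoly R 3).eval x = x ^ 3 - x ^ 2 - 2 * x + 1 := by
  have hS : Chebyshev.S R 3 = X * Chebyshev.S R 2 - Chebyshev.S R 1 := Chebyshev.S_add_two R 1
  rw [oddPolygonPoly, hS, show (3 - 1 : ℤ) = 2 by norm_num, Chebyshev.S_two, Chebyshev.S_one]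
  simp only [eval_sub, eval_mul, eval_pow, eval_X, eval_one]
  ring

theorem oddPolygonPoly_eval_two_mul_cos_mul_sin (m : ℤ) (θ : ℝ) :
    (oddPolygonPoly ℝ m).eval (2 * cos θ) * sin θ = sin ((m + 1) * θ) - sin (m * θ) := by
  rw [oddPolygonPoly, eval_sub, sub_mul, Chebyshev.S_two_mul_real_cos,
    Chebyshev.S_two_mul_real_cos, Int.cast_sub, Int.cast_one, sub_add_cancel]

theorem strictMono_oddPolygonAngle (m : ℕ) : StrictMono (oddPolygonAngle m) := by
  intro j k hjk
  unfold oddPolygonAngle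
  gcongr

theorem oddPolygonAngle_mem_Ioo {m k : ℕ} (hk : k < m) : oddPolygonAngle m k ∈ Set.Ioo 0 π := by
  refine ⟨by unfold oddPolygonAngle; positivity, ?_⟩
  calc oddPolygonAngle m k < oddPolygonAngle m m := strictMono_oddPolygonAngle m hk
    _ = π := mul_div_cancel_left₀ π (by positivity)

theorem strictAntiOn_two_mul_cos_oddPolygonAngle (m : ℕ) :
    StrictAntiOn (fun k ↦ 2 * cos (oddPolygonAngle m k)) (Set.Iio m) := by
  intro j hj k hk hjk
  have hcos := strictAntiOn_cos (Set.Ioo_subset_Icc_self (oddPolygonAngle_mem_Ioo hj))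
    (Set.Ioo_subset_Icc_self (oddPolygonAngle_mem_Ioo hk)) (strictMono_oddPolygonAngle m hjk)
  exact mul_lt_mul_of_pos_left hcos two_pos

theorem oddPolygonPoly_eval_two_mul_cos_oddPolygonAngle {m k : ℕ} (hk : k < m) :
    (oddPolygonPoly ℝ m).eval (2 * cos (oddPolygonAngle m k)) = 0 := by
  set θ := oddPolygonAngle m k with hθ
  have hsin : sin θ ≠ 0 := (sin_pos_of_mem_Ioo (oddPolygonAngle_mem_Ioo hk)).ne'
  have hsum : (m + 1) * θ = π - m * θ + k * (2 * π) := by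
    rw [hθ, oddPolygonAngle]
    field_simp
    ring
  refine (mul_eq_zero_iff_right hsin).mp ?_
  rw [oddPolygonPoly_eval_two_mul_cos_mul_sin, Int.cast_natCast, hsum, sin_add_nat_mul_two_pi,
    sin_pi_sub, sub_self]

theorem roots_oddPolygonPoly (m : ℕ) :
    (oddPolygonPoly ℝ m).roots =
      ((Finset.range m).image fun k ↦ 2 * cos (oddPolygonAngle m k)).val := by
  refine roots_eq_of_natDegree_le_card_of_ne_zero ?_ ?_ (oddPolygonPoly_ne_zero ℝ m)
  · simpa only [Finset.forall_mem_image, Finset.mem_range] using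
      fun k hk ↦ oddPolygonPoly_eval_two_mul_cos_oddPolygonAngle hk
  · have hinj : Set.InjOn (fun k ↦ 2 * cos (oddPolygonAngle m k)) (Finset.range m) := by
      simpa only [Finset.coe_range] using (strictAntiOn_two_mul_cos_oddPolygonAngle m).injOn
    rw [Finset.card_image_of_injOn hinj, Finset.card_range]
    exact natDegree_oddPolygonPoly_le ℝ m

theorem oddPolygonPoly_eval_eq_zero_iff (m : ℕ) (x : ℝ) :
    (oddPolygonPoly ℝ m).eval x = 0 ↔ ∃ k < m, x = 2 * cos (oddPolygonAngle m k) := by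
  rw [← IsRoot.def, ← mem_roots (oddPolygonPoly_ne_zero ℝ m), roots_oddPolygonPoly, Finset.mem_val]
  simp only [Finset.mem_image, Finset.mem_range, eq_comm]

end OddPolygon

/-- The real roots of the heptagon polynomial `C(7,x) = x³ - x² - 2x + 1` are exactly
the three pairwise distinct numbers `2cos(π/7)`, `2cos(3π/7)` and `2cos(5π/7)`
(the last equals `-2cos(2π/7)`). -/
theorem heptagon_polynomial_roots :
    (∀ x : ℝ, x^3 - x^2 - 2*x + 1 = 0 ↔
      (x = 2*Real.cos (π/7) ∨ x = 2*Real.cos (3*π/7) ∨ x = 2*Real.cos (5*π/7))) ∧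
    2*Real.cos (π/7) ≠ 2*Real.cos (3*π/7) ∧
    2*Real.cos (π/7) ≠ 2*Real.cos (5*π/7) ∧
    2*Real.cos (3*π/7) ≠ 2*Real.cos (5*π/7) ∧
    2*Real.cos (5*π/7) = -(2*Real.cos (2*π/7)) := by
  have angle_zero : oddPolygonAngle 3 0 = π/7 := by norm_num [oddPolygonAngle]
  have angle_one : oddPolygonAngle 3 1 = 3*π/7 := by norm_num [oddPolygonAngle]
  have angle_two : oddPolygonAngle 3 2 = 5*π/7 := by norm_num [oddPolygonAngle]
  have distinct {j k : ℕ} (hjk : j < k) (hk : k < 3) :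
      2 * cos (oddPolygonAngle 3 j) ≠ 2 * cos (oddPolygonAngle 3 k) :=
    (strictAntiOn_two_mul_cos_oddPolygonAngle 3 (hjk.trans hk) hk hjk).ne'
  rw [← angle_zero, ← angle_one, ← angle_two]
  refine ⟨fun x ↦ ?_, distinct one_pos (by simp), distinct two_pos (by simp),
    distinct one_lt_two (by simp), ?_⟩
  · rw [← oddPolygonPoly_three_eval]
    simpa only [Nat.exists_lt_succ_left, Nat.not_lt_zero, false_and, exists_false, or_false,
      zero_add, Nat.reduceAdd, Nat.cast_ofNat] using oddPolygonPoly_eval_eq_zero_iff 3 x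
  · rw [angle_two, show 5*π/7 = π - 2*π/7 by ring, cos_pi_sub, mul_neg]
end
end

section
/- For each k ∈ {1, 3, 5}, the number X = 1/cos(kπ/7) satisfies the cubic equation X³ − 4X² − 4X + 8 = 0. -/
noncomputable section
open Real

/-!
For odd `k`, the angle `θ = kπ/7` satisfies `4θ = kπ - 3θ`, so `cos 4θ + cos 3θ = 0`. Written in
terms of `x = 2 cos θ`, this sum is `cos θ + 1` times the heptagon polynomial `x³ - x² - 2x + 1`,
and `cos θ ≠ -1` because `7 ∤ k`. Hence `x` is a root of the heptagon polynomial, and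
multiplying `x³ - x² - 2x + 1 = 0` by `8/x³` gives the cubic for `X = 2/x = 1/cos θ`.
-/

lemma origami_cubic_two_div_of_heptagon_cubic {K : Type*} [Field K] {x : K}
    (hx : x ^ 3 - x ^ 2 - 2 * x + 1 = 0) :
    (2 / x) ^ 3 - 4 * (2 / x) ^ 2 - 4 * (2 / x) + 8 = 0 := by
  have hx0 : x ≠ 0 := by
    rintro rfl
    simp at hx
  calc (2 / x) ^ 3 - 4 * (2 / x) ^ 2 - 4 * (2 / x) + 8
      = 8 / x ^ 3 * (x ^ 3 - x ^ 2 - 2 * x + 1) := by field_simp; ring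
    _ = 0 := by rw [hx, mul_zero]

lemma cos_four_mul_add_cos_three_mul (θ : ℝ) :
    cos (4 * θ) + cos (3 * θ) =
      (cos θ + 1) * ((2 * cos θ) ^ 3 - (2 * cos θ) ^ 2 - 2 * (2 * cos θ) + 1) := by
  rw [show 4 * θ = 2 * (2 * θ) by ring, cos_two_mul, cos_two_mul, cos_three_mul]
  ring

lemma cos_four_mul_add_cos_three_mul_eq_zero_of_odd {k : ℤ} (hk : Odd k) :
    cos (4 * (k * π / 7)) + cos (3 * (k * π / 7)) = 0 := by
  rw [show 4 * (k * π / 7) = k * π - 3 * (k * π / 7) by ring, cos_int_mul_pi_sub,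
    hk.neg_one_zpow, neg_one_mul, neg_add_cancel]

lemma cos_int_mul_pi_div_ne_neg_one {k m : ℤ} (hm : m ≠ 0) (hmk : ¬ m ∣ k) :
    cos (k * π / m) ≠ -1 := by
  rw [Ne, cos_eq_neg_one_iff]
  rintro ⟨n, hn⟩
  have hm' : (m : ℝ) ≠ 0 := mod_cast hm
  have hkmn : (k : ℝ) = m * (1 + 2 * n) := by
    field_simp at hn
    linarith
  exact hmk ⟨1 + 2 * n, mod_cast hkmn⟩

lemma heptagon_cubic_two_mul_cos {k : ℤ} (hk : Odd k) (h7k : ¬ 7 ∣ k) :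
    (2 * cos (k * π / 7)) ^ 3 - (2 * cos (k * π / 7)) ^ 2 - 2 * (2 * cos (k * π / 7)) + 1 = 0 := by
  have hprod := cos_four_mul_add_cos_three_mul_eq_zero_of_odd hk
  rw [cos_four_mul_add_cos_three_mul] at hprod
  have hcos : cos (k * π / 7) ≠ -1 := mod_cast cos_int_mul_pi_div_ne_neg_one (by decide) h7k
  exact (mul_eq_zero.mp hprod).resolve_left fun h => hcos (eq_neg_of_add_eq_zero_left h)

theorem heptagon_origami_cubic_general {k : ℤ} (hk : Odd k) (h7k : ¬ 7 ∣ k) :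
    (1 / cos (k * π / 7)) ^ 3 - 4 * (1 / cos (k * π / 7)) ^ 2
      - 4 * (1 / cos (k * π / 7)) + 8 = 0 := by
  have htwo_div : 2 / (2 * cos (k * π / 7)) = 1 / cos (k * π / 7) := by
    rw [div_mul_eq_div_div, div_self two_ne_zero]
  rw [← htwo_div]
  exact origami_cubic_two_div_of_heptagon_cubic (heptagon_cubic_two_mul_cos hk h7k)

/-- For each `k ∈ {1, 3, 5}`, the number `X = 1/cos(kπ/7)` satisfies the cubic
`X³ - 4X² - 4X + 8 = 0` governing the origami construction of the heptagon roots. -/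
theorem heptagon_origami_cubic :
    ∀ k ∈ ({1, 3, 5} : Set ℕ),
      (1 / Real.cos ((k : ℝ)*π/7))^3 - 4*(1 / Real.cos ((k : ℝ)*π/7))^2
        - 4*(1 / Real.cos ((k : ℝ)*π/7)) + 8 = 0 := by
  intro k hk
  obtain ⟨hodd, h7k⟩ : Odd (k : ℤ) ∧ ¬ 7 ∣ (k : ℤ) := by rcases hk with rfl | rfl | rfl <;> decide
  exact mod_cast heptagon_origami_cubic_general hodd h7k
end
end

section
/- Let s ∈ (0,1). In ℝ², let g be the perpendicular bisector of C = (1,0) and C′ = (0,s) (the crease folding the corner C of the unit square onto the point C′ of the opposite side at height s), and let J′ be the reflection of J = (1, 1/3) across the line g. If the second coordinate of J′ equals 2/3 (i.e. the same fold carries J onto the horizontal line {p₂ = 2/3}), then s³ − s² + s − 1/3 = 0; equivalently, ((1 − s)/s)³ = 2, so the fold solves the doubling of the cube. -/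
noncomputable section
open Real EuclideanGeometry

/-! The reflection across the perpendicular bisector of `p` and `q` moves `x` by the multiple
`(dist x q ^ 2 - dist x p ^ 2) / dist p q ^ 2` of `q -ᵥ p`. For the crease folding `(1, 0)` onto
`(0, s)`, a point `(1, a)` therefore lands at height `b` exactly when
`s ^ 3 - (a + b) * s ^ 2 + s - (b - a) = 0`. At `a = 1/3`, `b = 2/3` the left-hand side is
`(2 * s ^ 3 - (1 - s) ^ 3) / 3`.
-/

section InnerProductSpace

variable {V P : Type*} [NormedAddCommGroup V] [InnerProductSpace ℝ V] [MetricSpace P]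
  [NormedAddTorsor V P]

instance nonempty_perpBisector (p q : P) : Nonempty (AffineSubspace.perpBisector p q) :=
  AffineSubspace.perpBisector_nonempty.to_subtype

instance hasOrthogonalProjection_direction_perpBisector (p q : P) :
    (AffineSubspace.perpBisector p q).direction.HasOrthogonalProjection := by
  rw [AffineSubspace.direction_perpBisector]
  infer_instance

theorem dist_sq_sub_dist_sq_eq_inner (p q x : P) :
    dist x p ^ 2 - dist x q ^ 2 = 2 * inner ℝ (x -ᵥ midpoint ℝ p q) (q -ᵥ p) := by
  have hp : x -ᵥ p = (x -ᵥ midpoint ℝ p q) + (⅟2 : ℝ) • (q -ᵥ p) := by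
    rw [← midpoint_vsub_left, vsub_add_vsub_cancel]
  have hq : x -ᵥ q = (x -ᵥ midpoint ℝ p q) - (⅟2 : ℝ) • (q -ᵥ p) := by
    rw [← right_vsub_midpoint, vsub_sub_vsub_cancel_right]
  rw [dist_eq_norm_vsub V, dist_eq_norm_vsub V, hp, hq, norm_add_sq_real, norm_sub_sq_real,
    real_inner_smul_right, invOf_eq_inv]
  ring

/-- For `p = q` the quotient is `0 / 0 = 0`, which matches the reflection across the whole space. -/
theorem reflection_perpBisector_apply (p q x : P) :
    reflection (AffineSubspace.perpBisector p q) x =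
      ((dist x q ^ 2 - dist x p ^ 2) / dist p q ^ 2) • (q -ᵥ p) +ᵥ x := by
  set t := (dist x q ^ 2 - dist x p ^ 2) / dist p q ^ 2
  have ht : t * ‖q -ᵥ p‖ ^ 2 = dist x q ^ 2 - dist x p ^ 2 := by
    rw [← dist_eq_norm_vsub, dist_comm q p]
    refine div_mul_cancel_of_imp fun hpq => ?_
    rw [dist_eq_zero.1 (pow_eq_zero_iff two_ne_zero |>.1 hpq), sub_self]
  have hfoot : (t / 2) • (q -ᵥ p) +ᵥ x ∈ AffineSubspace.perpBisector p q := by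
    rw [AffineSubspace.mem_perpBisector_iff_inner_eq_zero, vadd_vsub_assoc, inner_add_left,
      real_inner_smul_left, real_inner_self_eq_norm_sq]
    linear_combination (ht - dist_sq_sub_dist_sq_eq_inner p q x) / 2
  have hnormal : -(t / 2) • (q -ᵥ p) ∈ (AffineSubspace.perpBisector p q).directionᗮ := by
    rw [AffineSubspace.direction_perpBisector]
    exact Submodule.le_orthogonal_orthogonal _
      (Submodule.smul_mem _ _ (Submodule.mem_span_singleton_self _))
  have h := reflection_orthogonal_vadd hfoot hnormal
  simpa only [vadd_vadd, ← add_smul, ← neg_smul, neg_neg, neg_add_cancel, add_halves, zero_smul,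
    zero_vadd] using h

theorem reflection_perpBisector_left (p q : P) :
    reflection (AffineSubspace.perpBisector p q) p = q := by
  rw [reflection_perpBisector_apply]
  by_cases hpq : p = q <;> simp [hpq]

theorem reflection_eq_of_perpBisector_eq {p q x y : P}
    (h : AffineSubspace.perpBisector x y = AffineSubspace.perpBisector p q) :
    reflection (AffineSubspace.perpBisector p q) x = y := by
  rw [← eq_reflection_of_eq_subspace h, reflection_perpBisector_left]

end InnerProductSpace

theorem dist_sq_pt_pt (a b c d : ℝ) : dist (pt a b) (pt c d) ^ 2 = (a - c) ^ 2 + (b - d) ^ 2 := by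
  simp [pt, EuclideanSpace.dist_sq_eq, Real.dist_eq]

theorem reflection_perpBisector_pt_apply_one (s a : ℝ) :
    reflection (AffineSubspace.perpBisector (pt 1 0) (pt 0 s)) (pt 1 a) 1 =
      a + (s ^ 2 - 2 * a * s + 1) / (1 + s ^ 2) * s := by
  rw [reflection_perpBisector_apply, dist_sq_pt_pt, dist_sq_pt_pt, dist_sq_pt_pt]
  simp only [pt, vsub_eq_sub, vadd_eq_add, PiLp.add_apply, PiLp.smul_apply, PiLp.sub_apply,
    Matrix.cons_val_one, Matrix.cons_val_fin_one, smul_eq_mul]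
  ring

theorem reflection_perpBisector_pt_apply_one_eq_iff (s a b : ℝ) :
    reflection (AffineSubspace.perpBisector (pt 1 0) (pt 0 s)) (pt 1 a) 1 = b ↔
      s ^ 3 - (a + b) * s ^ 2 + s - (b - a) = 0 := by
  have hs : 1 + s ^ 2 ≠ 0 := by positivity
  have hdiff : a + (s ^ 2 - 2 * a * s + 1) / (1 + s ^ 2) * s - b =
      (s ^ 3 - (a + b) * s ^ 2 + s - (b - a)) / (1 + s ^ 2) := by
    field_simp
    ring
  rw [reflection_perpBisector_pt_apply_one, ← sub_eq_zero, hdiff, div_eq_zero_iff,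
    or_iff_left hs]

theorem one_sub_div_cube_eq_two_iff {K : Type*} [Field K] (h3 : (3 : K) ≠ 0) {s : K}
    (hs : s ≠ 0) : ((1 - s) / s) ^ 3 = 2 ↔ s ^ 3 - s ^ 2 + s - 1 / 3 = 0 := by
  have hexpand : (1 - s) ^ 3 - 2 * s ^ 3 = -3 * (s ^ 3 - s ^ 2 + s - 1 / 3) := by
    field_simp
    ring
  rw [div_pow, div_eq_iff (pow_ne_zero 3 hs), ← sub_eq_zero, hexpand]
  simp [h3]

/-- **Doubling the cube by origami.**  Let `s ∈ (0,1)`, let `g` be the crease folding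
the corner `C = (1,0)` of the unit square onto `C' = (0,s)`, and let `J'` be the image
of `J = (1, 1/3)` under the fold, i.e. the reflection of `J` across `g` (characterised,
for `J' ≠ J`, by `g` being the perpendicular bisector of `J` and `J'`).  If the second
coordinate of `J'` is `2/3`, then `s³ - s² + s - 1/3 = 0`; equivalently
`((1 - s)/s)³ = 2`, so the fold doubles the cube. -/
theorem doubling_the_cube_fold (s : ℝ) (hs : s ∈ Set.Ioo (0:ℝ) 1)
    (C : Pt) (hC : C = pt 1 0) (C' : Pt) (hC' : C' = pt 0 s)
    (J : Pt) (hJ : J = pt 1 (1/3)) (J' : Pt) (hJne : J' ≠ J)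
    (hrefl : perpBisector J J' = perpBisector C C')
    (hJ'y : J' 1 = 2/3) :
    s^3 - s^2 + s - 1/3 = 0 ∧ ((1 - s)/s)^3 = 2 := by
  subst hC hC' hJ
  have hJ' : reflection (AffineSubspace.perpBisector (pt 1 0) (pt 0 s)) (pt 1 (1 / 3)) = J' := by
    refine reflection_eq_of_perpBisector_eq (SetLike.coe_injective ?_)
    simpa only [coe_affineSubspace_perpBisector] using hrefl
  have hcubic : s ^ 3 - s ^ 2 + s - 1 / 3 = 0 := by
    have h := (reflection_perpBisector_pt_apply_one_eq_iff s (1 / 3) (2 / 3)).1 (hJ' ▸ hJ'y)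
    linear_combination h
  exact ⟨hcubic, (one_sub_div_cube_eq_two_iff three_ne_zero hs.1.ne').2 hcubic⟩
end
end

section
/- Let α ∈ (0, π/2) and h > 0. For k ∈ {0, 1, 2} put θ_k = (α + kπ)/3 and X_k = h·cos(θ_k)/sin(θ_k). Then each X_k satisfies the cubic equation X³ − (3h/tan α)·X² − 3h²·X + h³/tan α = 0, and X_0, X_1, X_2 are pairwise distinct; in particular this cubic, which governs the origami trisection fold, has three distinct real roots, corresponding to the trisection of the angles α, π + α, and π − α (the root for π − α being X_2 = −h·cot((π − α)/3)). -/
noncomputable section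
open Real

/-!
Writing `X = h * cot θ` turns the cubic into `h ^ 3` times the triple-angle identity relating
`cot θ` to `cot (3 * θ) = cot α`. Since `cot` has period `π`, adding `k * π` to `α` leaves the
cubic unchanged, while it moves the third of the angle by `k * π / 3`, which is a period of `cot`
only when `3 ∣ k`.
-/

section Cotangent

variable {x y θ : ℝ}

theorem sin_ne_zero_of_sin_three_mul_ne_zero (hθ : sin (3 * θ) ≠ 0) : sin θ ≠ 0 := by
  contrapose! hθ
  simp [sin_three_mul, hθ]

theorem sin_add_int_mul_pi_ne_zero (hx : sin x ≠ 0) (n : ℤ) : sin (x + n * π) ≠ 0 := by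
  rw [sin_add_int_mul_pi]
  exact mul_ne_zero (zpow_ne_zero n (by norm_num)) hx

theorem cot_pi_sub (x : ℝ) : cot (π - x) = -cot x := by
  simp only [cot_eq_cos_div_sin, cos_pi_sub, sin_pi_sub, neg_div]

theorem cot_add_int_mul_pi (x : ℝ) (n : ℤ) : cot (x + n * π) = cot x := by
  have sign_ne_zero : (-1 : ℝ) ^ n ≠ 0 := zpow_ne_zero n (by norm_num)
  rw [cot_eq_cos_div_sin, cot_eq_cos_div_sin, cos_add_int_mul_pi, sin_add_int_mul_pi,
    mul_div_mul_left _ _ sign_ne_zero]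

theorem cot_eq_cot_iff (hx : sin x ≠ 0) (hy : sin y ≠ 0) :
    cot x = cot y ↔ ∃ n : ℤ, n * π = x - y := by
  rw [← sin_eq_zero_iff, sin_sub, sub_eq_zero, cot_eq_cos_div_sin, cot_eq_cos_div_sin,
    div_eq_div_iff hx hy, mul_comm (cos y), eq_comm]

theorem cot_three_mul_mul (hθ : sin (3 * θ) ≠ 0) :
    cot (3 * θ) * (3 * cot θ ^ 2 - 1) = cot θ ^ 3 - 3 * cot θ := by
  have sin_triple : sin (3 * θ) = sin θ * (3 * cos θ ^ 2 - sin θ ^ 2) := by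
    linear_combination sin_three_mul θ - 3 * sin θ * sin_sq_add_cos_sq θ
  have cos_triple : cos (3 * θ) = cos θ * (cos θ ^ 2 - 3 * sin θ ^ 2) := by
    linear_combination cos_three_mul θ + 3 * cos θ * sin_sq_add_cos_sq θ
  have sin_ne_zero : sin θ ≠ 0 := sin_ne_zero_of_sin_three_mul_ne_zero hθ
  rw [cot_eq_cos_div_sin, cot_eq_cos_div_sin, div_mul_eq_mul_div, div_eq_iff hθ, sin_triple,
    cos_triple]
  field_simp

end Cotangent

section Trisection

variable {α : ℝ}

theorem sin_trisection_ne_zero (hα : sin α ≠ 0) (k : ℤ) : sin ((α + k * π) / 3) ≠ 0 := by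
  apply sin_ne_zero_of_sin_three_mul_ne_zero
  rw [mul_div_cancel₀ _ three_ne_zero]
  exact sin_add_int_mul_pi_ne_zero hα k

theorem cot_trisection_cubic (hα : sin α ≠ 0) (k : ℤ) :
    cot ((α + k * π) / 3) ^ 3 - 3 * cot α * cot ((α + k * π) / 3) ^ 2
      - 3 * cot ((α + k * π) / 3) + cot α = 0 := by
  have three_mul_angle : 3 * ((α + k * π) / 3) = α + k * π := mul_div_cancel₀ _ three_ne_zero
  have sin_ne_zero : sin (3 * ((α + k * π) / 3)) ≠ 0 := by
    rw [three_mul_angle]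
    exact sin_add_int_mul_pi_ne_zero hα k
  have triple_angle := cot_three_mul_mul sin_ne_zero
  rw [three_mul_angle, cot_add_int_mul_pi] at triple_angle
  linear_combination -triple_angle

theorem cot_trisection_eq_iff (hα : sin α ≠ 0) (j k : ℤ) :
    cot ((α + j * π) / 3) = cot ((α + k * π) / 3) ↔ j ≡ k [ZMOD 3] := by
  rw [cot_eq_cot_iff (sin_trisection_ne_zero hα j) (sin_trisection_ne_zero hα k),
    Int.modEq_comm, Int.modEq_iff_dvd]
  refine exists_congr fun n => ?_
  have angle_sub : (α + j * π) / 3 - (α + k * π) / 3 = (j - k) / 3 * π := by ring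
  rw [angle_sub, mul_left_inj' pi_ne_zero, eq_div_iff three_ne_zero, eq_comm, mul_comm]
  norm_cast

end Trisection

/-- `Real.tan` takes the junk value `0` at the odd multiples of `π / 2`, so `tan α ≠ 0` says that
both `sin α` and `cos α` are nonzero. -/
theorem origami_trisection_cubic_general {α h : ℝ} (hα : tan α ≠ 0) (hh : h ≠ 0)
    (X : ℕ → ℝ) (hX : ∀ k, X k = h * cos ((α + k * π) / 3) / sin ((α + k * π) / 3)) :
    (∀ k, X k ^ 3 - 3 * h / tan α * X k ^ 2 - 3 * h ^ 2 * X k + h ^ 3 / tan α = 0) ∧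
    (∀ j k, X j = X k ↔ j ≡ k [MOD 3]) ∧
    X 2 = -(h * cos ((π - α) / 3) / sin ((π - α) / 3)) := by
  have hsin : sin α ≠ 0 := fun hs => hα (by rw [tan_eq_sin_div_cos, hs, zero_div])
  have X_eq_cot (k : ℕ) : X k = h * cot ((α + (k : ℤ) * π) / 3) := by
    rw [hX, cot_eq_cos_div_sin, mul_div_assoc, Int.cast_natCast]
  refine ⟨fun k => ?_, fun j k => ?_, ?_⟩
  · rw [X_eq_cot, div_eq_mul_inv (3 * h), div_eq_mul_inv (h ^ 3), tan_inv_eq_cot]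
    linear_combination h ^ 3 * cot_trisection_cubic hsin k
  · rw [X_eq_cot, X_eq_cot, mul_right_inj' hh, cot_trisection_eq_iff hsin]
    exact Int.natCast_modEq_iff
  · have angle_eq : (α + ((2 : ℕ) : ℤ) * π) / 3 = π - (π - α) / 3 := by push_cast; ring
    rw [X_eq_cot, angle_eq, cot_pi_sub, cot_eq_cos_div_sin, mul_neg, mul_div_assoc]

/-- **The trisection cubic has three distinct real roots.**  Let `α ∈ (0, π/2)` and
`h > 0`.  For `k ∈ {0,1,2}` put `θ_k = (α + kπ)/3` and `X_k = h·cos θ_k/sin θ_k`.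
Then each `X_k` is a root of `X³ - (3h/tan α)X² - 3h²X + h³/tan α = 0`, the roots
`X_0, X_1, X_2` are pairwise distinct, and `X_2 = -h·cos((π-α)/3)/sin((π-α)/3)`,
the root corresponding to the trisection of `π - α` (while `X_0, X_1` correspond to
the trisection of `α` and `π + α`). -/
theorem origami_trisection_cubic (α h : ℝ) (hα : α ∈ Set.Ioo 0 (π/2)) (hh : 0 < h)
    (X : ℕ → ℝ) (hX : ∀ k, X k = h * Real.cos ((α + k*π)/3) / Real.sin ((α + k*π)/3)) :
    (∀ k ∈ ({0, 1, 2} : Set ℕ),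
      (X k)^3 - (3*h/Real.tan α)*(X k)^2 - 3*h^2*(X k) + h^3/Real.tan α = 0) ∧
    X 0 ≠ X 1 ∧ X 0 ≠ X 2 ∧ X 1 ≠ X 2 ∧
    X 2 = -(h * Real.cos ((π - α)/3) / Real.sin ((π - α)/3)) := by
  have tan_pos : 0 < tan α := tan_pos_of_pos_of_lt_pi_div_two hα.1 hα.2
  obtain ⟨root, eq_iff, X_two⟩ := origami_trisection_cubic_general tan_pos.ne' hh.ne' X hX
  refine ⟨fun k _ => root k, ?_, ?_, ?_, X_two⟩ <;> exact (eq_iff _ _).not.mpr (by decide)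
end
end
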